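/- Let d ≥ 1 and let μ be the Haar probability measure on the unitary group Matrix.unitaryGroup (Fin d) ℂ. Then ∫ ‖(U : Matrix (Fin d) (Fin d) ℂ) 0 0‖ dμ(U) = √π · Γ(d) / (2 · Γ(d + 1/2)), where Γ denotes the real Gamma function. Equivalently, this value equals 4^{d-1} / ((2d-1) · C(2d-2, d-1)) with C a binomial coefficient. -/

import Mathlib

open Matrix MeasureTheory

/-! Average `‖⟪U eⱼ, z⟫‖ ^ p * exp (-‖z‖ ^ 2)` over both `U` and `z`, in two orders. For fixed `z`,
left invariance of `μ` replaces `z / ‖z‖` by `eᵢ`, so the average over `U` is `‖z‖ ^ p` times the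
moment of `‖U i j‖`, and what remains is a radial Gaussian integral over a space of real dimension
`2 * n`. For fixed `U`, rotation invariance of the Gaussian weight replaces the unit vector `U eⱼ`
by a coordinate vector, which leaves a Gaussian integral over `ℂ`. Comparing the two gives
`∫ ‖U i j‖ ^ p ∂μ = Γ(p / 2 + 1) * Γ(n) / Γ(n + p / 2)`, whose case `p = 1` is the asserted value.
-/

section GaussianMoments

theorem integral_norm_rpow_mul_exp_neg_norm_sq_eq_measureReal_ball {E : Type*}
    [NormedAddCommGroup E] [NormedSpace ℝ E] [FiniteDimensional ℝ E] [Nontrivial E]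
    [MeasurableSpace E] [BorelSpace E] (ν : Measure E) [ν.IsAddHaarMeasure] {p : ℝ}
    (hp : -(Module.finrank ℝ E : ℝ) < p) :
    ∫ z : E, ‖z‖ ^ p * Real.exp (-‖z‖ ^ 2) ∂ν =
      Module.finrank ℝ E * ν.real (Metric.ball 0 1) *
        (Real.Gamma ((Module.finrank ℝ E + p) / 2) / 2) := by
  have hdim : 1 ≤ Module.finrank ℝ E := Module.finrank_pos
  have hradial : ∫ r in Set.Ioi (0 : ℝ),
      r ^ (Module.finrank ℝ E - 1) • (r ^ p * Real.exp (-r ^ 2)) =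
        Real.Gamma ((Module.finrank ℝ E + p) / 2) / 2 := calc
    _ = ∫ r in Set.Ioi (0 : ℝ),
          r ^ ((Module.finrank ℝ E : ℝ) - 1 + p) * Real.exp (-r ^ (2 : ℝ)) := by
      refine setIntegral_congr_fun measurableSet_Ioi fun r (hr : 0 < r) ↦ ?_
      simp only [smul_eq_mul, Real.rpow_add hr, Real.rpow_two, mul_assoc,
        ← Real.rpow_natCast r (Module.finrank ℝ E - 1), Nat.cast_sub hdim, Nat.cast_one]
    _ = _ := by
      rw [integral_rpow_mul_exp_neg_rpow two_pos (by linarith)]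
      ring_nf
  rw [integral_fun_norm_addHaar ν fun r ↦ r ^ p * Real.exp (-r ^ 2), hradial]
  simp only [nsmul_eq_mul, smul_eq_mul, mul_assoc]

theorem integral_norm_rpow_mul_exp_neg_norm_sq {E : Type*} [NormedAddCommGroup E]
    [NormedSpace ℝ E] [FiniteDimensional ℝ E] [Nontrivial E] [MeasurableSpace E] [BorelSpace E]
    (ν : Measure E) [ν.IsAddHaarMeasure] {p : ℝ} (hp : -(Module.finrank ℝ E : ℝ) < p) :
    ∫ z : E, ‖z‖ ^ p * Real.exp (-‖z‖ ^ 2) ∂ν =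
      Real.Gamma ((Module.finrank ℝ E + p) / 2) / Real.Gamma (Module.finrank ℝ E / 2) *
        ∫ z : E, Real.exp (-‖z‖ ^ 2) ∂ν := by
  have hdim : (0 : ℝ) < Module.finrank ℝ E := by exact_mod_cast Module.finrank_pos
  have hzero := integral_norm_rpow_mul_exp_neg_norm_sq_eq_measureReal_ball ν (p := 0) (by linarith)
  simp only [Real.rpow_zero, one_mul, add_zero] at hzero
  have hGamma : Real.Gamma (Module.finrank ℝ E / 2) ≠ 0 :=
    (Real.Gamma_pos_of_pos (by positivity)).ne'
  rw [integral_norm_rpow_mul_exp_neg_norm_sq_eq_measureReal_ball ν hp, hzero]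
  field_simp

theorem integral_complex_norm_rpow_mul_exp_neg_norm_sq {p : ℝ} (hp : -2 < p) :
    ∫ w : ℂ, ‖w‖ ^ p * Real.exp (-‖w‖ ^ 2) =
      Real.Gamma (p / 2 + 1) * ∫ w : ℂ, Real.exp (-‖w‖ ^ 2) := by
  rw [integral_norm_rpow_mul_exp_neg_norm_sq volume (by simpa using hp)]
  simp [add_div, add_comm]

variable {ι : Type*} [Fintype ι]

-- Uniqueness of Haar measure provides `c`, which cancels in ratios of such integrals, so that `ν`
-- need not be compared with the product measure.
theorem exists_integral_prod_apply_eq_mul_prod_integral {E : ι → Type*}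
    [∀ j, NormedAddCommGroup (E j)] [∀ j, NormedSpace ℝ (E j)] [∀ j, FiniteDimensional ℝ (E j)]
    [∀ j, MeasureSpace (E j)] [∀ j, BorelSpace (E j)]
    [∀ j, (volume : Measure (E j)).IsAddHaarMeasure]
    (q : ENNReal) [Fact (1 ≤ q)] (ν : Measure (PiLp q E)) [ν.IsAddHaarMeasure] :
    ∃ c : ℝ, ∀ f : ∀ j, E j → ℝ,
      ∫ z : PiLp q E, ∏ j, f j (z j) ∂ν = c * ∏ j, ∫ w, f j w := by
  have (j : ι) : ProperSpace (E j) := FiniteDimensional.proper_real (E j)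
  let e := (PiLp.continuousLinearEquiv q ℝ E).symm
  have : ((volume : Measure (∀ j, E j)).map e).IsAddHaarMeasure := e.isAddHaarMeasure_map volume
  refine ⟨ν.addHaarScalarFactor (volume.map e), fun f ↦ ?_⟩
  calc ∫ z, ∏ j, f j (z j) ∂ν
      = ν.addHaarScalarFactor (volume.map e) * ∫ z, ∏ j, f j (z j) ∂volume.map e := by
        conv_lhs => rw [Measure.isAddLeftInvariant_eq_smul ν (volume.map e)]
        exact integral_smul_nnreal_measure _ _
    _ = ν.addHaarScalarFactor (volume.map e) * ∫ x : ∀ j, E j, ∏ j, f j (x j) :=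
        congrArg _ (e.toHomeomorph.measurableEmbedding.integral_map _)
    _ = _ := by rw [integral_fintype_prod_volume_eq_prod f]

theorem integral_norm_apply_rpow_mul_exp_neg_norm_sq (i : ι) {p : ℝ} (hp : -2 < p) :
    ∫ z : EuclideanSpace ℂ ι, ‖z i‖ ^ p * Real.exp (-‖z‖ ^ 2) =
      Real.Gamma (p / 2 + 1) * ∫ z : EuclideanSpace ℂ ι, Real.exp (-‖z‖ ^ 2) := by
  classical
  obtain ⟨c, hc⟩ := exists_integral_prod_apply_eq_mul_prod_integral (E := fun _ : ι ↦ ℂ)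
    2 volume
  have hexp (z : EuclideanSpace ℂ ι) : Real.exp (-‖z‖ ^ 2) = ∏ j, Real.exp (-‖z j‖ ^ 2) := by
    rw [EuclideanSpace.norm_sq_eq, ← Finset.sum_neg_distrib, Real.exp_sum]
  have hcoord (z : EuclideanSpace ℂ ι) : ‖z i‖ ^ p * Real.exp (-‖z‖ ^ 2) =
      ∏ j, (if j = i then ‖z j‖ ^ p else 1) * Real.exp (-‖z j‖ ^ 2) := by
    rw [Finset.prod_mul_distrib, Fintype.prod_ite_eq', hexp]
  have hfactor (j : ι) : ∫ w : ℂ, (if j = i then ‖w‖ ^ p else 1) * Real.exp (-‖w‖ ^ 2) =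
      (if j = i then Real.Gamma (p / 2 + 1) else 1) * ∫ w : ℂ, Real.exp (-‖w‖ ^ 2) := by
    split_ifs
    · exact integral_complex_norm_rpow_mul_exp_neg_norm_sq hp
    · simp only [one_mul]
  calc ∫ z : EuclideanSpace ℂ ι, ‖z i‖ ^ p * Real.exp (-‖z‖ ^ 2)
      = c * ∏ j, ∫ w : ℂ, (if j = i then ‖w‖ ^ p else 1) * Real.exp (-‖w‖ ^ 2) := by
        simp only [hcoord]
        exact hc fun j w ↦ (if j = i then ‖w‖ ^ p else 1) * Real.exp (-‖w‖ ^ 2)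
    _ = Real.Gamma (p / 2 + 1) * (c * ∏ _j : ι, ∫ w : ℂ, Real.exp (-‖w‖ ^ 2)) := by
        simp only [hfactor, Finset.prod_mul_distrib, Fintype.prod_ite_eq']
        ring
    _ = _ := by
        simp only [hexp]
        exact congrArg _ (hc fun _ w ↦ Real.exp (-‖w‖ ^ 2)).symm

theorem exists_orthonormalBasis_apply_eq {𝕜 E : Type*} [RCLike 𝕜] [NormedAddCommGroup E]
    [InnerProductSpace 𝕜 E] [FiniteDimensional 𝕜 E]
    (hcard : Module.finrank 𝕜 E = Fintype.card ι) (i : ι) {u : E} (hu : ‖u‖ = 1) :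
    ∃ b : OrthonormalBasis ι 𝕜 E, b i = u := by
  have hv : Orthonormal 𝕜 (({i} : Set ι).domRestrict fun _ ↦ u) :=
    ⟨fun _ ↦ hu, fun j k hjk ↦ (hjk (Subsingleton.elim j k)).elim⟩
  obtain ⟨b, hb⟩ := hv.exists_orthonormalBasis_extension_of_card_eq hcard
  exact ⟨b, hb i rfl⟩

theorem integral_comp_inner_norm_eq_integral_comp_apply_norm {F : Type*} [NormedAddCommGroup F]
    [NormedSpace ℝ F] (f : ℂ → ℝ → F) (i : ι) {u : EuclideanSpace ℂ ι} (hu : ‖u‖ = 1) :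
    ∫ z : EuclideanSpace ℂ ι, f (inner ℂ u z) ‖z‖ = ∫ z : EuclideanSpace ℂ ι, f (z i) ‖z‖ := by
  obtain ⟨b, rfl⟩ := exists_orthonormalBasis_apply_eq (𝕜 := ℂ) (E := EuclideanSpace ℂ ι)
    finrank_euclideanSpace i hu
  let e : EuclideanSpace ℂ ι ≃ₗᵢ[ℝ] EuclideanSpace ℂ ι :=
    { b.repr.toLinearEquiv.restrictScalars ℝ with norm_map' := b.repr.norm_map }
  have he (z : EuclideanSpace ℂ ι) : e z = b.repr z := rfl
  rw [← e.measurePreserving.integral_comp e.toHomeomorph.measurableEmbedding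
    fun z ↦ f (z i) ‖z‖]
  simp only [he, b.repr_apply_apply, b.repr.norm_map]

theorem integral_norm_inner_rpow_mul_exp_neg_norm_sq {p : ℝ} (hp : -2 < p)
    {u : EuclideanSpace ℂ ι} (hu : ‖u‖ = 1) :
    ∫ z : EuclideanSpace ℂ ι, ‖inner ℂ u z‖ ^ p * Real.exp (-‖z‖ ^ 2) =
      Real.Gamma (p / 2 + 1) * ∫ z : EuclideanSpace ℂ ι, Real.exp (-‖z‖ ^ 2) := by
  have hu_ne : u ≠ 0 := norm_ne_zero_iff.1 (hu.trans_ne one_ne_zero)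
  obtain ⟨i, -⟩ : ∃ i, u i ≠ 0 := by
    by_contra! hzero
    exact hu_ne (PiLp.ext hzero)
  rw [integral_comp_inner_norm_eq_integral_comp_apply_norm
      (fun w r ↦ ‖w‖ ^ p * Real.exp (-r ^ 2)) i hu,
    integral_norm_apply_rpow_mul_exp_neg_norm_sq i hp]

theorem integral_exp_neg_norm_sq_pos {V : Type*} [NormedAddCommGroup V] [InnerProductSpace ℝ V]
    [FiniteDimensional ℝ V] [MeasurableSpace V] [BorelSpace V] :
    0 < ∫ z : V, Real.exp (-‖z‖ ^ 2) := by
  have h := GaussianFourier.integral_rexp_neg_mul_sq_norm (V := V) one_pos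
  simp only [neg_mul, one_mul, div_one] at h
  rw [h]
  positivity

theorem integrable_norm_inner_rpow_mul_exp_neg_norm_sq {p : ℝ} (hp : -2 < p)
    {u : EuclideanSpace ℂ ι} (hu : ‖u‖ = 1) :
    Integrable fun z : EuclideanSpace ℂ ι ↦ ‖inner ℂ u z‖ ^ p * Real.exp (-‖z‖ ^ 2) := by
  apply Integrable.of_integral_ne_zero
  rw [integral_norm_inner_rpow_mul_exp_neg_norm_sq hp hu]
  exact (mul_pos (Real.Gamma_pos_of_pos (by linarith)) integral_exp_neg_norm_sq_pos).ne'

end GaussianMoments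

theorem exists_norm_eq_one_and_eq_norm_smul (𝕜 : Type*) [RCLike 𝕜] {E : Type*}
    [NormedAddCommGroup E] [NormedSpace 𝕜 E] [Nontrivial E] (z : E) :
    ∃ u : E, ‖u‖ = 1 ∧ z = (‖z‖ : 𝕜) • u := by
  obtain ⟨w, hw, hz⟩ : ∃ w : E, w ≠ 0 ∧ z = (‖z‖ : 𝕜) • ((‖w‖⁻¹ : 𝕜) • w) := by
    obtain rfl | hz := eq_or_ne z 0
    · obtain ⟨w, hw⟩ := exists_ne (0 : E)
      exact ⟨w, hw, by simp⟩
    · exact ⟨z, hz, by rw [smul_inv_smul₀ (by simpa using hz)]⟩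
  exact ⟨_, norm_smul_inv_norm hw, hz⟩

section Columns

variable {𝕜 ι κ m : Type*} [RCLike 𝕜]

/-- The `j`-th column of a matrix, viewed in `EuclideanSpace` so that columns of unitary matrices
are unit vectors and inner products of columns are entries of matrix products. -/
def euclideanCol (A : Matrix m κ 𝕜) (j : κ) : EuclideanSpace 𝕜 m :=
  WithLp.toLp 2 (A.col j)

theorem continuous_euclideanCol (j : κ) :
    Continuous fun A : Matrix m κ 𝕜 ↦ euclideanCol A j :=
  (PiLp.continuous_toLp 2 _).comp (continuous_pi fun k ↦ continuous_id.matrix_elem k j)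

variable [Fintype m]

theorem inner_euclideanCol_euclideanCol (A : Matrix m ι 𝕜) (B : Matrix m κ 𝕜) (i : ι) (j : κ) :
    inner 𝕜 (euclideanCol A i) (euclideanCol B j) = (Aᴴ * B) i j := by
  simp [euclideanCol, EuclideanSpace.inner_toLp_toLp, Matrix.mul_apply, dotProduct, mul_comm]

variable [DecidableEq m]

theorem norm_euclideanCol_unitaryGroup (U : Matrix.unitaryGroup m 𝕜) (j : m) :
    ‖euclideanCol (U : Matrix m m 𝕜) j‖ = 1 := by
  have h := inner_euclideanCol_euclideanCol (U : Matrix m m 𝕜) (U : Matrix m m 𝕜) j j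
  rw [← Matrix.star_eq_conjTranspose, Matrix.UnitaryGroup.star_mul_self, Matrix.one_apply_eq,
    inner_self_eq_norm_sq_to_K] at h
  exact (pow_eq_one_iff_of_nonneg (norm_nonneg _) two_ne_zero).1 (by exact_mod_cast h)

theorem exists_unitaryGroup_euclideanCol_eq (i : m) {u : EuclideanSpace 𝕜 m} (hu : ‖u‖ = 1) :
    ∃ g : Matrix.unitaryGroup m 𝕜, euclideanCol (g : Matrix m m 𝕜) i = u := by
  obtain ⟨b, rfl⟩ := exists_orthonormalBasis_apply_eq (𝕜 := 𝕜) (E := EuclideanSpace 𝕜 m)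
    finrank_euclideanSpace i hu
  refine ⟨⟨_, (EuclideanSpace.basisFun m 𝕜).toMatrix_orthonormalBasis_mem_unitary b⟩, ?_⟩
  ext j
  simp [euclideanCol, Module.Basis.toMatrix_apply]

variable [MeasurableSpace (Matrix.unitaryGroup m 𝕜)] [BorelSpace (Matrix.unitaryGroup m 𝕜)]
  (μ : Measure (Matrix.unitaryGroup m 𝕜)) [μ.IsMulLeftInvariant]

theorem integral_comp_inner_euclideanCol {F : Type*} [NormedAddCommGroup F] [NormedSpace ℝ F]
    (f : 𝕜 → F) (i j : m) {u : EuclideanSpace 𝕜 m} (hu : ‖u‖ = 1) :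
    ∫ U : Matrix.unitaryGroup m 𝕜, f (inner 𝕜 u (euclideanCol (U : Matrix m m 𝕜) j)) ∂μ =
      ∫ U : Matrix.unitaryGroup m 𝕜, f ((U : Matrix m m 𝕜) i j) ∂μ := by
  obtain ⟨g, rfl⟩ := exists_unitaryGroup_euclideanCol_eq i hu
  rw [← integral_mul_left_eq_self
    (fun U : Matrix.unitaryGroup m 𝕜 ↦ f ((U : Matrix m m 𝕜) i j)) g⁻¹]
  simp only [inner_euclideanCol_euclideanCol, Matrix.UnitaryGroup.mul_val,
    Matrix.UnitaryGroup.inv_val, Matrix.star_eq_conjTranspose]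

theorem integral_norm_inner_euclideanCol_rpow (i j : m) (p : ℝ) (z : EuclideanSpace 𝕜 m) :
    ∫ U : Matrix.unitaryGroup m 𝕜, ‖inner 𝕜 (euclideanCol (U : Matrix m m 𝕜) j) z‖ ^ p ∂μ =
      ‖z‖ ^ p * ∫ U : Matrix.unitaryGroup m 𝕜, ‖(U : Matrix m m 𝕜) i j‖ ^ p ∂μ := by
  have : Nonempty m := ⟨i⟩
  obtain ⟨u, hu, hz⟩ := exists_norm_eq_one_and_eq_norm_smul 𝕜 z
  rw [← integral_comp_inner_euclideanCol μ (fun w ↦ ‖w‖ ^ p) i j hu, ← integral_const_mul]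
  refine integral_congr_ae (.of_forall fun U ↦ ?_)
  have hscale : ‖inner 𝕜 (euclideanCol (U : Matrix m m 𝕜) j) z‖ =
      ‖z‖ * ‖inner 𝕜 u (euclideanCol (U : Matrix m m 𝕜) j)‖ := by
    conv_lhs => rw [hz, inner_smul_right, norm_mul, RCLike.norm_ofReal, abs_norm, norm_inner_symm]
  simp only [hscale, Real.mul_rpow (norm_nonneg _) (norm_nonneg _)]

end Columns

section EntryMoments

variable {ι : Type*} [Fintype ι] [DecidableEq ι]
  [MeasurableSpace (Matrix.unitaryGroup ι ℂ)] [BorelSpace (Matrix.unitaryGroup ι ℂ)]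
  (μ : Measure (Matrix.unitaryGroup ι ℂ))

theorem integrable_prod_norm_inner_euclideanCol_rpow_mul_exp [IsFiniteMeasure μ] (j : ι) {p : ℝ}
    (hp : -2 < p) :
    Integrable (fun x : Matrix.unitaryGroup ι ℂ × EuclideanSpace ℂ ι ↦
      ‖inner ℂ (euclideanCol (x.1 : Matrix ι ι ℂ) j) x.2‖ ^ p * Real.exp (-‖x.2‖ ^ 2))
      (μ.prod volume) := by
  have : SecondCountableTopology (Matrix ι ι ℂ) :=
    inferInstanceAs (SecondCountableTopology (ι → ι → ℂ))
  have hinner : Continuous fun x : Matrix.unitaryGroup ι ℂ × EuclideanSpace ℂ ι ↦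
      inner ℂ (euclideanCol (x.1 : Matrix ι ι ℂ) j) x.2 :=
    ((continuous_euclideanCol j).comp (continuous_subtype_val.comp continuous_fst)).inner
      continuous_snd
  have hmeas : Measurable fun x : Matrix.unitaryGroup ι ℂ × EuclideanSpace ℂ ι ↦
      ‖inner ℂ (euclideanCol (x.1 : Matrix ι ι ℂ) j) x.2‖ ^ p * Real.exp (-‖x.2‖ ^ 2) :=
    (hinner.measurable.norm.pow_const p).mul (by fun_prop)
  have hsection (U : Matrix.unitaryGroup ι ℂ) : Integrable fun z : EuclideanSpace ℂ ι ↦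
      ‖inner ℂ (euclideanCol (U : Matrix ι ι ℂ) j) z‖ ^ p * Real.exp (-‖z‖ ^ 2) :=
    integrable_norm_inner_rpow_mul_exp_neg_norm_sq hp (norm_euclideanCol_unitaryGroup U j)
  have hnorm (U : Matrix.unitaryGroup ι ℂ) (z : EuclideanSpace ℂ ι) :
      ‖‖inner ℂ (euclideanCol (U : Matrix ι ι ℂ) j) z‖ ^ p * Real.exp (-‖z‖ ^ 2)‖ =
        ‖inner ℂ (euclideanCol (U : Matrix ι ι ℂ) j) z‖ ^ p * Real.exp (-‖z‖ ^ 2) :=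
    Real.norm_of_nonneg (by positivity)
  refine (integrable_prod_iff hmeas.aestronglyMeasurable).2 ⟨.of_forall hsection, ?_⟩
  simp only [hnorm, integral_norm_inner_rpow_mul_exp_neg_norm_sq hp
    (norm_euclideanCol_unitaryGroup _ j), integrable_const]

theorem integral_norm_rpow_mul_exp_mul_integral_norm_entry_rpow [μ.IsMulLeftInvariant]
    [IsProbabilityMeasure μ] (i j : ι) {p : ℝ} (hp : -2 < p) :
    (∫ z : EuclideanSpace ℂ ι, ‖z‖ ^ p * Real.exp (-‖z‖ ^ 2)) *
        ∫ U : Matrix.unitaryGroup ι ℂ, ‖(U : Matrix ι ι ℂ) i j‖ ^ p ∂μ =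
      Real.Gamma (p / 2 + 1) * ∫ z : EuclideanSpace ℂ ι, Real.exp (-‖z‖ ^ 2) := calc
  _ = ∫ z : EuclideanSpace ℂ ι, ∫ U : Matrix.unitaryGroup ι ℂ,
        ‖inner ℂ (euclideanCol (U : Matrix ι ι ℂ) j) z‖ ^ p * Real.exp (-‖z‖ ^ 2) ∂μ := by
    simp only [integral_mul_const, integral_norm_inner_euclideanCol_rpow μ i j,
      mul_right_comm _ (∫ _, _ ∂μ)]
  _ = ∫ U : Matrix.unitaryGroup ι ℂ, (∫ z : EuclideanSpace ℂ ι,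
        ‖inner ℂ (euclideanCol (U : Matrix ι ι ℂ) j) z‖ ^ p * Real.exp (-‖z‖ ^ 2)) ∂μ :=
    (integral_integral_swap (integrable_prod_norm_inner_euclideanCol_rpow_mul_exp μ j hp)).symm
  _ = _ := by
    simp only [integral_norm_inner_rpow_mul_exp_neg_norm_sq hp (norm_euclideanCol_unitaryGroup _ j),
      integral_const, probReal_univ, one_smul]

theorem integral_norm_entry_rpow_unitaryGroup [μ.IsMulLeftInvariant] [IsProbabilityMeasure μ]
    (i j : ι) {p : ℝ} (hp : -2 < p) :
    ∫ U : Matrix.unitaryGroup ι ℂ, ‖(U : Matrix ι ι ℂ) i j‖ ^ p ∂μ =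
      Real.Gamma (p / 2 + 1) * Real.Gamma (Fintype.card ι) /
        Real.Gamma (Fintype.card ι + p / 2) := by
  have : Nonempty ι := ⟨i⟩
  have hcard : (1 : ℝ) ≤ Fintype.card ι := by exact_mod_cast Fintype.card_pos
  have hdim : (Module.finrank ℝ (EuclideanSpace ℂ ι) : ℝ) = 2 * Fintype.card ι := by
    rw [finrank_real_of_complex, finrank_euclideanSpace, Nat.cast_mul, Nat.cast_two]
  have hmoments := integral_norm_rpow_mul_exp_mul_integral_norm_entry_rpow μ i j hp
  rw [integral_norm_rpow_mul_exp_neg_norm_sq volume (by rw [hdim]; linarith), hdim, add_div,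
    mul_div_cancel_left₀ _ (two_ne_zero' ℝ), mul_right_comm] at hmoments
  have hgaussian : ∫ z : EuclideanSpace ℂ ι, Real.exp (-‖z‖ ^ 2) ≠ 0 :=
    integral_exp_neg_norm_sq_pos.ne'
  have hGamma_card : Real.Gamma (Fintype.card ι) ≠ 0 :=
    (Real.Gamma_pos_of_pos (by linarith)).ne'
  have hGamma_add : Real.Gamma (Fintype.card ι + p / 2) ≠ 0 :=
    (Real.Gamma_pos_of_pos (by linarith)).ne'
  rw [eq_div_iff hGamma_add, ← mul_right_cancel₀ hgaussian hmoments, mul_right_comm,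
    div_mul_cancel₀ _ hGamma_card, mul_comm]

end EntryMoments

theorem factorial_mul_Gamma_nat_add_one_add_half (n : ℕ) :
    n.factorial * Real.Gamma (n + 1 + 1 / 2) * (2 * 4 ^ n) =
      (2 * n + 1) * (2 * n).factorial * Real.sqrt Real.pi := by
  have hpow : (2 : ℝ) ^ (1 - 2 * ((n : ℝ) + 1)) * (2 * 4 ^ n) = 1 := by
    rw [show (1 : ℝ) - 2 * (n + 1) = -((2 * n + 1 : ℕ) : ℝ) by push_cast; ring,
      Real.rpow_neg two_pos.le, Real.rpow_natCast, pow_succ', pow_mul]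
    field_simp
    norm_num
  have hGamma : Real.Gamma (2 * ((n : ℝ) + 1)) = (2 * n + 1) * (2 * n).factorial := by
    rw [show 2 * ((n : ℝ) + 1) = (2 * n + 1 : ℕ) + 1 by push_cast; ring,
      Real.Gamma_nat_eq_factorial, Nat.factorial_succ]
    push_cast
    ring
  rw [← Real.Gamma_nat_eq_factorial n, Real.Gamma_mul_Gamma_add_half, hGamma]
  linear_combination ((2 * n + 1) * (2 * n).factorial * Real.sqrt Real.pi) * hpow

theorem sqrt_pi_mul_Gamma_div_eq_four_pow_div_centralBinom (n : ℕ) :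
    Real.sqrt Real.pi * Real.Gamma (n + 1) / (2 * Real.Gamma (n + 1 + 1 / 2)) =
      4 ^ n / ((2 * n + 1) * n.centralBinom) := by
  have hbinom : ((2 * n).factorial : ℝ) = n.centralBinom * n.factorial * n.factorial := by
    rw [Nat.centralBinom, two_mul]
    exact_mod_cast (Nat.add_choose_mul_factorial_mul_factorial n n).symm
  have hcentral : (0 : ℝ) < n.centralBinom := by exact_mod_cast n.centralBinom_pos
  have hfact : (n.factorial : ℝ) ≠ 0 := by exact_mod_cast n.factorial_ne_zero
  have hduplication := factorial_mul_Gamma_nat_add_one_add_half n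
  rw [hbinom] at hduplication
  rw [Real.Gamma_nat_eq_factorial, div_eq_div_iff (by positivity) (by positivity)]
  refine mul_left_cancel₀ hfact ?_
  linear_combination -hduplication

theorem haar_average_abs_entry_of_unitary_general {ι : Type*} [Fintype ι] [DecidableEq ι]
    [MeasurableSpace (Matrix.unitaryGroup ι ℂ)] [BorelSpace (Matrix.unitaryGroup ι ℂ)]
    (μ : Measure (Matrix.unitaryGroup ι ℂ)) [μ.IsMulLeftInvariant] [IsProbabilityMeasure μ]
    (i j : ι) :
    ∫ U : Matrix.unitaryGroup ι ℂ, ‖(U : Matrix ι ι ℂ) i j‖ ∂μ =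
        Real.sqrt Real.pi * Real.Gamma (Fintype.card ι) /
          (2 * Real.Gamma (Fintype.card ι + 1 / 2)) ∧
    Real.sqrt Real.pi * Real.Gamma (Fintype.card ι) /
          (2 * Real.Gamma (Fintype.card ι + 1 / 2)) =
        4 ^ (Fintype.card ι - 1) / ((2 * Fintype.card ι - 1) *
          Nat.choose (2 * Fintype.card ι - 2) (Fintype.card ι - 1)) := by
  constructor
  · have hmoment := integral_norm_entry_rpow_unitaryGroup μ i j (p := 1) (by norm_num)
    simp only [Real.rpow_one] at hmoment
    rw [hmoment, Real.Gamma_add_one (by norm_num), Real.Gamma_one_half_eq]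
    ring
  · obtain ⟨n, hn⟩ := Nat.exists_eq_add_of_le' (Fintype.card_pos_iff.2 ⟨i⟩)
    rw [hn, Nat.add_sub_cancel, show 2 * (n + 1) - 2 = 2 * n by lia,
      ← Nat.centralBinom_eq_two_mul_choose, Nat.cast_add_one,
      sqrt_pi_mul_Gamma_div_eq_four_pow_div_centralBinom]
    ring

/-- The Haar-average of the modulus of a single entry of a random unitary,
`∫ |U₀₀| dμ(U)` over the Haar probability measure on the unitary group `U(d)`, equals
`√π Γ(d) / (2 Γ(d + 1/2))`, equivalently `4^(d-1) / ((2d-1) · C(2d-2, d-1))`.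
This is the symmetry of entanglement `E_S` of a separable pure state. -/
theorem haar_average_abs_entry_of_unitary
    {d : ℕ} (hd : 1 ≤ d)
    [MeasurableSpace (Matrix.unitaryGroup (Fin d) ℂ)]
    [BorelSpace (Matrix.unitaryGroup (Fin d) ℂ)]
    (μ : Measure (Matrix.unitaryGroup (Fin d) ℂ))
    [μ.IsHaarMeasure] [IsProbabilityMeasure μ] :
    ∫ U : Matrix.unitaryGroup (Fin d) ℂ,
        ‖(U : Matrix (Fin d) (Fin d) ℂ) ⟨0, hd⟩ ⟨0, hd⟩‖ ∂μ =
        Real.sqrt Real.pi * Real.Gamma d / (2 * Real.Gamma (d + 1 / 2)) ∧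
    Real.sqrt Real.pi * Real.Gamma d / (2 * Real.Gamma (d + 1 / 2)) =
        4 ^ (d - 1) / ((2 * d - 1) * Nat.choose (2 * d - 2) (d - 1)) := by
  simpa only [Fintype.card_fin] using
    haar_average_abs_entry_of_unitary_general μ ⟨0, hd⟩ ⟨0, hd⟩
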